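/- arXiv:2605.15754 — 2 statements merged into one kernel-verified Lean document; each statement's English description precedes it below -/
import Mathlib

section
/- Let K ⊂ ℝ^d, Ω ⊂ ℝⁿ be nonempty compact sets and T > 0. Let 𝒢 : C(K, ℝ) → C(Ω × [0,T], ℝ) be a continuous operator (with both function spaces carrying the uniform norm). Then for every compact subset 𝒦 ⊂ C(K, ℝ) and every ε > 0, there exist a positive integer N, continuous functionals b_i : C(K, ℝ) → ℝ, continuous spatial basis functions φ_i ∈ C(Ω, ℝ), and continuous temporal basis functions ψ_i ∈ C([0,T], ℝ) for i = 1, …, N, such that sup_{f ∈ 𝒦} sup_{(x,t) ∈ Ω × [0,T]} | 𝒢(f)(x,t) − Σ_{i=1}^N b_i(f)·φ_i(x)·ψ_i(t) | < ε. -/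
def sepMonoid (X Y Z : Type*) [TopologicalSpace X] [TopologicalSpace Y] [TopologicalSpace Z]
    (S : Set X) : Submonoid C(S × (Y × Z), ℝ) where
  carrier := {F | ∃ (b : C(X, ℝ)) (φ : C(Y, ℝ)) (ψ : C(Z, ℝ)),
    ∀ q, F q = b q.1 * φ q.2.1 * ψ q.2.2}
  one_mem' := ⟨1, 1, 1, by simp⟩
  mul_mem' := by
    rintro F G ⟨b, φ, ψ, h⟩ ⟨b', φ', ψ', h'⟩
    refine ⟨b * b', φ * φ', ψ * ψ', fun q => ?_⟩
    simp only [ContinuousMap.mul_apply, h, h']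
    ring

theorem sep_approx {X Y Z : Type*} [MetricSpace X] [MetricSpace Y] [MetricSpace Z]
    [CompactSpace Y] [CompactSpace Z] (S : Set X) (hS : IsCompact S)
    (F : S × (Y × Z) → ℝ) (hF : Continuous F) (ε : ℝ) (hε : 0 < ε) :
    ∃ (N : ℕ) (b : Fin N → C(X, ℝ)) (φ : Fin N → C(Y, ℝ)) (ψ : Fin N → C(Z, ℝ)),
      ∀ q, |F q - ∑ i, b i q.1 * φ i q.2.1 * ψ i q.2.2| < ε := by
  haveI : CompactSpace S := isCompact_iff_compactSpace.mp hS
  set A := Algebra.adjoin ℝ (sepMonoid X Y Z S : Set C(S × (Y × Z), ℝ)) with hA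
  have hsep : A.SeparatesPoints := by
    have key : ∀ (b : C(X, ℝ)) (φ : C(Y, ℝ)) (ψ : C(Z, ℝ)) (p q : S × (Y × Z)),
        b p.1 * φ p.2.1 * ψ p.2.2 ≠ b q.1 * φ q.2.1 * ψ q.2.2 →
        ∃ f ∈ (fun f : C(S × (Y × Z), ℝ) => (f : S × (Y × Z) → ℝ)) '' (A : Set _),
          f p ≠ f q := by
      intro b φ ψ p q h
      let g : C(S × (Y × Z), ℝ) := ⟨fun q => b q.1 * φ q.2.1 * ψ q.2.2, by fun_prop⟩
      exact ⟨g, ⟨g, Algebra.subset_adjoin ⟨b, φ, ψ, fun _ => rfl⟩, rfl⟩, h⟩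
    rintro ⟨s, y, z⟩ ⟨s', y', z'⟩ hne
    by_cases h1 : s = s'
    · by_cases h2 : y = y'
      · have h3 : z ≠ z' := by rintro rfl; exact hne (by rw [h1, h2])
        refine key 1 1 ⟨fun x => dist x z', by fun_prop⟩ _ _ ?_
        simpa using h3
      · refine key 1 ⟨fun x => dist x y', by fun_prop⟩ 1 _ _ ?_
        simpa using h2
    · refine key ⟨fun x => dist x s', by fun_prop⟩ 1 1 _ _ ?_
      simpa [Subtype.ext_iff] using h1
  obtain ⟨⟨g, hg⟩, hgF⟩ :=
    ContinuousMap.exists_mem_subalgebra_near_continuous_of_separatesPoints A hsep F hF ε hε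
  have hg' : g ∈ Submodule.span ℝ (sepMonoid X Y Z S : Set C(S × (Y × Z), ℝ)) := by
    have := Algebra.adjoin_eq_span ℝ (sepMonoid X Y Z S : Set C(S × (Y × Z), ℝ))
    rw [Submonoid.closure_eq] at this
    rw [← this]
    exact hg
  obtain ⟨N, c, u, rfl⟩ := Submodule.mem_span_set'.mp hg'
  choose b φ ψ h using fun i => (u i).2
  refine ⟨N, fun i => c i • b i, φ, ψ, fun q => ?_⟩
  have := hgF q
  rw [abs_sub_comm]
  simpa [ContinuousMap.sum_apply, h, mul_assoc] using this

/-- **Universal approximation with spatiotemporally decoupled basis functions (PI-SWNO).**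
Let `K ⊂ ℝ^d`, `Ω ⊂ ℝⁿ` be nonempty compact sets, `T > 0`, and let
`𝒢 : C(K, ℝ) → C(Ω × [0,T], ℝ)` be continuous (uniform-norm topologies). Then for every
compact `𝒦 ⊂ C(K, ℝ)` and every `ε > 0` there exist `N ≥ 1`, continuous functionals
`b_i`, spatial basis functions `φ_i ∈ C(Ω, ℝ)` and temporal basis functions
`ψ_i ∈ C([0,T], ℝ)` with `|𝒢 f (x,t) - ∑ i, b_i f * φ_i x * ψ_i t| < ε` uniformly over
`f ∈ 𝒦` and `(x,t) ∈ Ω × [0,T]`. -/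
theorem piswno_universal_approximation {d n : ℕ}
    (K : Set (EuclideanSpace ℝ (Fin d))) (hKc : IsCompact K) (hKne : K.Nonempty)
    (Ω : Set (EuclideanSpace ℝ (Fin n))) (hΩc : IsCompact Ω) (hΩne : Ω.Nonempty)
    (T : ℝ) (hT : 0 < T)
    (𝒢 : C(K, ℝ) → C(Ω × Set.Icc (0 : ℝ) T, ℝ)) (h𝒢 : Continuous 𝒢)
    (𝒦 : Set C(K, ℝ)) (h𝒦 : IsCompact 𝒦) (ε : ℝ) (hε : 0 < ε) :
    ∃ N : ℕ, 0 < N ∧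
      ∃ (b : Fin N → (C(K, ℝ) → ℝ)) (φ : Fin N → C(Ω, ℝ))
        (ψ : Fin N → C(Set.Icc (0 : ℝ) T, ℝ)),
        (∀ i, Continuous (b i)) ∧
        ∀ f ∈ 𝒦, ∀ p : Ω × Set.Icc (0 : ℝ) T,
          |𝒢 f p - ∑ i, b i f * φ i p.1 * ψ i p.2| < ε := by
  haveI : CompactSpace K := isCompact_iff_compactSpace.mp hKc
  haveI : CompactSpace Ω := isCompact_iff_compactSpace.mp hΩc
  obtain ⟨N, b, φ, ψ, h⟩ := sep_approx (X := C(K, ℝ)) 𝒦 h𝒦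
    (fun q : 𝒦 × (Ω × Set.Icc (0 : ℝ) T) => 𝒢 q.1 q.2) (by fun_prop) ε hε
  refine ⟨N + 1, N.succ_pos, Fin.cons (fun _ => 0) (fun i => b i), Fin.cons 0 φ,
    Fin.cons 0 ψ, ?_, ?_⟩
  · intro i
    refine Fin.cases ?_ (fun i => ?_) i
    · exact continuous_const
    · exact (b i).continuous
  · intro f hf p
    simpa [Fin.sum_univ_succ] using h (⟨f, hf⟩, p)
end

section
/- Let K ⊂ ℝ^d and Ω ⊂ ℝⁿ be nonempty compact sets and T > 0. Let 𝒢 : C(K, ℝ) → C(Ω × [0,T], ℝ) be a continuous operator with respect to the uniform norms. Then for every compact subset 𝒦 ⊂ C(K, ℝ) and every ε > 0, there exist a positive integer n, continuous functionals b_i : C(K, ℝ) → ℝ, and continuous functions ψ_i ∈ C(Ω × [0,T], ℝ) for i = 1, …, n, such that sup_{f ∈ 𝒦} ‖ 𝒢(f) − Σ_{i=1}^n b_i(f)·ψ_i ‖_∞ < ε, where ‖u‖_∞ = sup_{(x,t) ∈ Ω × [0,T]} |u(x,t)|. -/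
/-- **Universal approximation theorem for operators (branch–trunk / DeepONet form).**
Let `K ⊂ ℝ^d`, `Ω ⊂ ℝⁿ` be nonempty compact sets, `T > 0`, and let
`𝒢 : C(K, ℝ) → C(Ω × [0,T], ℝ)` be continuous with respect to the uniform norms.
Then for every compact `𝒦 ⊂ C(K, ℝ)` and every `ε > 0` there exist `n ≥ 1`,
continuous functionals `b_i : C(K, ℝ) → ℝ` and continuous functions
`ψ_i ∈ C(Ω × [0,T], ℝ)` such that `‖𝒢 f - ∑ i, b_i f • ψ_i‖_∞ < ε` uniformly over
`f ∈ 𝒦` (equivalently, by compactness, strictly at every point of `Ω × [0,T]`). -/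
theorem deeponet_universal_approximation {d m : ℕ}
    (K : Set (EuclideanSpace ℝ (Fin d))) (hKc : IsCompact K) (hKne : K.Nonempty)
    (Ω : Set (EuclideanSpace ℝ (Fin m))) (hΩc : IsCompact Ω) (hΩne : Ω.Nonempty)
    (T : ℝ) (hT : 0 < T)
    (𝒢 : C(K, ℝ) → C(Ω × Set.Icc (0 : ℝ) T, ℝ)) (h𝒢 : Continuous 𝒢)
    (𝒦 : Set C(K, ℝ)) (h𝒦 : IsCompact 𝒦) (ε : ℝ) (hε : 0 < ε) :
    ∃ n : ℕ, 0 < n ∧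
      ∃ (b : Fin n → (C(K, ℝ) → ℝ)) (ψ : Fin n → C(Ω × Set.Icc (0 : ℝ) T, ℝ)),
        (∀ i, Continuous (b i)) ∧
        ∀ f ∈ 𝒦, ∀ p : Ω × Set.Icc (0 : ℝ) T,
          |𝒢 f p - ∑ i, b i f * ψ i p| < ε := by
  haveI : CompactSpace K := isCompact_iff_compactSpace.mp hKc
  haveI : CompactSpace Ω := isCompact_iff_compactSpace.mp hΩc
  rcases 𝒦.eq_empty_or_nonempty with h0 | hne
  · subst h0
    exact ⟨1, one_pos, fun _ _ => 0, fun _ => 0, fun _ => continuous_const,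
      fun f hf => absurd hf (Set.notMem_empty f)⟩
  obtain ⟨t, ht⟩ := h𝒦.elim_finite_subcover
    (fun g : C(K, ℝ) => 𝒢 ⁻¹' Metric.ball (𝒢 g) ε)
    (fun g => Metric.isOpen_ball.preimage h𝒢)
    (fun f _ => Set.mem_iUnion.mpr ⟨f, Metric.mem_ball_self hε⟩)
  have htne : 0 < t.card := by
    obtain ⟨f, hf⟩ := hne
    have h1 := ht hf
    simp only [Set.mem_iUnion] at h1
    obtain ⟨g, hg, -⟩ := h1
    exact Finset.card_pos.mpr ⟨g, hg⟩
  let e := t.equivFin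
  obtain ⟨ρ, hρ⟩ := PartitionOfUnity.exists_isSubordinate h𝒦.isClosed
    (fun i : Fin t.card => 𝒢 ⁻¹' Metric.ball (𝒢 (e.symm i)) ε)
    (fun i => Metric.isOpen_ball.preimage h𝒢)
    (fun f hf => by
      have h1 := ht hf
      simp only [Set.mem_iUnion] at h1
      obtain ⟨g, hg, h2⟩ := h1
      exact Set.mem_iUnion.mpr ⟨e ⟨g, hg⟩, by simpa using h2⟩)
  refine ⟨t.card, htne, fun i => ρ i, fun i => 𝒢 (e.symm i), fun i => (ρ i).continuous, ?_⟩
  intro f hf p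
  have key := ρ.finsum_smul_mem_convex (g := fun i _ => 𝒢 (e.symm i) p)
    (t := Metric.ball (𝒢 f p) ε) hf (fun i hi => by
      have h1 : f ∈ 𝒢 ⁻¹' Metric.ball (𝒢 (e.symm i)) ε :=
        hρ i (subset_tsupport _ hi)
      have h2 : dist (𝒢 f) (𝒢 (e.symm i)) < ε := h1
      rw [Metric.mem_ball, dist_comm]
      exact lt_of_le_of_lt (ContinuousMap.dist_apply_le_dist p) h2) (convex_ball _ _)
  rw [finsum_eq_sum_of_fintype, Metric.mem_ball, dist_comm, Real.dist_eq] at key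
  simpa only [smul_eq_mul] using key
end
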